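/- Let (S^1,S^2) be a Lax–Sato pair satisfying the generating Lax–Sato equations. Let s^2(z) be a formal series of the form s^2(z) = Σ_{n≥0} t^2_n z^n + Σ_{n≥1} s^2_n z^{−n} with s^2_n ∈ R, satisfying the associated linear equations (z′−z) D^1(z′) s^2(z) = −{S^2(z′), s^2(z)} and (z′−z) D^2(z′) s^2(z) = {S^1(z′), s^2(z)} coefficientwise in z′, and suppose (s^2)_+ = (S^2)_+. Then s^2 = S^2 up to a series in z with constant coefficients: the series φ := s^2 − S^2 satisfies ∂^1_n φ = ∂^2_n φ = 0 (coefficientwise) for all n ≥ 0. -/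

import Mathlib

/-!
Common setup for the second heavenly equation hierarchy (Bogdanov–Konopelchenko).

Formal series in `z` with `z`-exponents bounded above are encoded as Hahn series
over `ℤ` in the variable `w = z⁻¹`: the coefficient at `n : ℤ` of `A : LS R` is
the coefficient of `z^{-n}` of the corresponding series.
-/

noncomputable section

/-- Series in `z` with `z`-exponents bounded above (the coefficient at `n : ℤ`
is the coefficient of `z^{-n}`). -/
abbrev LS (R : Type*) [CommRing R] : Type _ := HahnSeries ℤ R

/-- The variable `z`. -/
def zz {R : Type*} [CommRing R] : LS R := HahnSeries.single (-1 : ℤ) (1 : R)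

/-- Constant series. -/
def CC {R : Type*} [CommRing R] (r : R) : LS R := HahnSeries.C r

/-- `tail g = Σ_{k≥0} (g k) · z^{-(k+1)}` : a series in negative powers of `z`. -/
def tail {R : Type*} [CommRing R] (g : ℕ → R) : LS R :=
  HahnSeries.single (1 : ℤ) (1 : R) * HahnSeries.ofPowerSeries ℤ R (PowerSeries.mk g)

/-- `geom v = 1/(z - v) := Σ_{k≥0} v^k z^{-(k+1)}`. -/
def geom {R : Type*} [CommRing R] (v : R) : LS R := tail fun k => v ^ k

/-- The projection `(·)_-` keeping only negative powers of `z`. -/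
def truncMinus {R : Type*} [CommRing R] (A : LS R) : LS R where
  coeff n := if 1 ≤ n then A.coeff n else 0
  isPWO_support' := A.isPWO_support'.mono (fun n hn => by
    by_cases h : (1:ℤ) ≤ n <;> simp_all [Function.mem_support])

/-- The projection `(·)_+` keeping only nonnegative powers of `z`. -/
def truncPlus {R : Type*} [CommRing R] (A : LS R) : LS R where
  coeff n := if n ≤ 0 then A.coeff n else 0
  isPWO_support' := A.isPWO_support'.mono (fun n hn => by
    by_cases h : n ≤ (0:ℤ) <;> simp_all [Function.mem_support])

/-- A commutative ring equipped with pairwise commuting derivations `∂^{j+1}_n`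
(`j : Fin 2`, `n : ℕ`) and distinguished elements `t^{j+1}_n` satisfying
`∂^j_m t^k_n = δ_{jk} δ_{mn}`. -/
structure HeavenlySetting (R : Type*) [CommRing R] where
  d : Fin 2 → ℕ → R → R
  d_add : ∀ j n a b, d j n (a + b) = d j n a + d j n b
  d_mul : ∀ j n a b, d j n (a * b) = a * d j n b + d j n a * b
  d_comm : ∀ j n k m a, d j n (d k m a) = d k m (d j n a)
  t : Fin 2 → ℕ → R
  d_t : ∀ j n k m, d j n (t k m) = if j = k ∧ n = m then 1 else 0

/-- The data of a Lax–Sato pair: `Sneg j n` is the coefficient `S^{j+1}_{n+1}`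
of `z^{-(n+1)}` in `S^{j+1} = Σ_{n≥0} t^{j+1}_n z^n + Σ_{n≥1} S^{j+1}_n z^{-n}`. -/
structure LaxPair (R : Type*) [CommRing R] where
  Sneg : Fin 2 → ℕ → R

namespace HeavenlySetting

variable {R : Type*} [CommRing R] (H : HeavenlySetting R) (P : LaxPair R)

/-- The coefficient of `z^n` in `S^{j+1}`. -/
def coeffS (j : Fin 2) (n : ℤ) : R :=
  if 0 ≤ n then H.t j n.toNat else P.Sneg j (-n - 1).toNat

/-- The series `∂^{a+1}_m S^{j+1}` (its `z`-exponents are bounded above since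
`∂^{a+1}_m t^{j+1}_n = δ_{aj} δ_{mn}`). -/
def dS (a : Fin 2) (m : ℕ) (j : Fin 2) : LS R :=
  HahnSeries.single (-(m : ℤ)) (if a = j then 1 else 0)
    + tail fun k => H.d a m (P.Sneg j k)

/-- `S^{j+1}_x = ∂^1_0 S^{j+1}`. -/
def Sx (j : Fin 2) : LS R := H.dS P 0 0 j

/-- `S^{j+1}_y = ∂^2_0 S^{j+1}`. -/
def Sy (j : Fin 2) : LS R := H.dS P 1 0 j

/-- The condition `(dS^1 ∧ dS^2)_- = 0`. -/
def WedgeMinusZero : Prop :=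
  ∀ a b : Fin 2, ∀ m n : ℕ,
    truncMinus (H.dS P a m 0 * H.dS P b n 1 - H.dS P b n 0 * H.dS P a m 1) = 0

/-- The Lax–Sato equations `∂^1_n S^j = -{(z^n S^2)_+, S^j}`,
`∂^2_n S^j = {(z^n S^1)_+, S^j}` together with the bracket `{S^1,S^2} = 1`;
here `{f,g} = f_x g_y - f_y g_x` and `((z^n S^k)_+)_x = (z^n (S^k)_x)_+` etc. -/
def LaxSatoEqs : Prop :=
  (∀ n : ℕ, ∀ j : Fin 2,
    H.dS P 0 n j =
      -(truncPlus (zz ^ n * H.Sx P 1) * H.Sy P j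
        - truncPlus (zz ^ n * H.Sy P 1) * H.Sx P j)) ∧
  (∀ n : ℕ, ∀ j : Fin 2,
    H.dS P 1 n j =
      truncPlus (zz ^ n * H.Sx P 0) * H.Sy P j
        - truncPlus (zz ^ n * H.Sy P 0) * H.Sx P j) ∧
  (H.Sx P 0 * H.Sy P 1 - H.Sy P 0 * H.Sx P 1 = 1)

/-- Coefficient of `z'^k` in `D^{a+1}(z') S^{j+1}(z) = Σ_{m≥0} z'^{-m-1} ∂^{a+1}_m S^{j+1}(z)`. -/
def Dc (a j : Fin 2) (k : ℤ) : LS R :=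
  if k ≤ -1 then H.dS P a (-k - 1).toNat j else 0

/-- Generating Lax–Sato equations
`(z'-z) D^1(z') S^j(z) = -{S^2(z'), S^j(z)}` and
`(z'-z) D^2(z') S^j(z) = {S^1(z'), S^j(z)}`, stated coefficientwise in `z'`
(`k : ℤ` being the `z'`-exponent; both sides of each equation are series in `z`). -/
def GenLaxSato : Prop :=
  (∀ j : Fin 2, ∀ k : ℤ,
    H.Dc P 0 j (k - 1) - zz * H.Dc P 0 j k =
      -(CC (H.d 0 0 (H.coeffS P 1 k)) * H.Sy P j
        - CC (H.d 1 0 (H.coeffS P 1 k)) * H.Sx P j)) ∧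
  (∀ j : Fin 2, ∀ k : ℤ,
    H.Dc P 1 j (k - 1) - zz * H.Dc P 1 j k =
      CC (H.d 0 0 (H.coeffS P 0 k)) * H.Sy P j
        - CC (H.d 1 0 (H.coeffS P 0 k)) * H.Sx P j)

/-- `Θ` is a τ-function for the pair: `S^1_{n+1} = -∂^2_n Θ`, `S^2_{n+1} = ∂^1_n Θ`. -/
def IsTau (Θ : R) : Prop :=
  ∀ n : ℕ, P.Sneg 0 n = -H.d 1 n Θ ∧ P.Sneg 1 n = H.d 0 n Θ

/-- `σ` is a wave function with constant parameter `p`: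
`(z-p) D^1(z)σ = -{S^2(z), σ}` and `(z-p) D^2(z)σ = {S^1(z), σ}`,
coefficientwise in `z^{-1}`, with `p` annihilated by all derivations. -/
def IsWave (σ p : R) : Prop :=
  (∀ a : Fin 2, ∀ n : ℕ, H.d a n p = 0) ∧
  ((zz - CC p) * tail (fun n => H.d 0 n σ) =
    -(H.Sx P 1 * CC (H.d 1 0 σ) - H.Sy P 1 * CC (H.d 0 0 σ))) ∧
  ((zz - CC p) * tail (fun n => H.d 1 n σ) =
    H.Sx P 0 * CC (H.d 1 0 σ) - H.Sy P 0 * CC (H.d 0 0 σ))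

end HeavenlySetting

namespace HeavenlySetting

variable {R : Type*} [CommRing R]

/-- The series `∂^{a+1}_m s^2` for a formal series
`s^2(z) = Σ_{n≥0} t^2_n z^n + Σ_{n≥1} s^2_n z^{-n}` with negative-part
coefficients `s : ℕ → R` (`s n = s^2_{n+1}`). -/
def ds2 (H : HeavenlySetting R) (s : ℕ → R) (a : Fin 2) (m : ℕ) : LS R :=
  HahnSeries.single (-(m : ℤ)) (if a = 1 then 1 else 0) + tail fun k => H.d a m (s k)

/-- Coefficient of `z'^k` in `D^{a+1}(z') s^2(z)`. -/
def Dcs (H : HeavenlySetting R) (s : ℕ → R) (a : Fin 2) (k : ℤ) : LS R :=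
  if k ≤ -1 then H.ds2 s a (-k - 1).toNat else 0

end HeavenlySetting

/-!
For two solutions of the same linear equations, the difference `φ` has only negative powers of `z`,
and comparing the coefficients of `z'^{-m-1}` gives `z ∂^j_m φ = ∂^j_{m+1} φ + α φ_x + β φ_y` with
`α, β ∈ R` depending on `j` and `m`. So the `R`-span of the series `∂^j_m φ` is stable under
multiplication by `z`. A power of `z` would move a nonzero element of it to a series with a nonzero
coefficient at `z^0`, so the span is zero.
-/

section Series

variable {R : Type*} [CommRing R]

theorem coeff_zz_mul (A : LS R) (n : ℤ) :
    (zz * A).coeff n = A.coeff (n + 1) := by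
  rw [zz, HahnSeries.coeff_single_mul, one_mul, sub_neg_eq_add]

theorem CC_mul_eq_smul (r : R) (A : LS R) : CC r * A = r • A :=
  HahnSeries.C_mul_eq_smul

theorem coeff_tail_add_one (g : ℕ → R) (n : ℕ) :
    (tail g).coeff (n + 1 : ℕ) = g n := by
  rw [Nat.cast_succ, tail, HahnSeries.coeff_single_mul_add, HahnSeries.ofPowerSeries_apply_coeff,
    one_mul, PowerSeries.coeff_mk]

theorem coeff_tail_zero (g : ℕ → R) : (tail g).coeff 0 = 0 := by
  rw [tail, HahnSeries.coeff_single_mul, HahnSeries.ofPowerSeries_apply, one_mul]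
  refine HahnSeries.embDomain_of_notMem_range ?_
  rintro ⟨n, hn⟩
  have hn' : (n : ℤ) = 0 - 1 := hn
  omega

theorem coeff_eq_zero_of_zz_mul_mem_span {ι : Type*} {A : ι → LS R}
    (h_zero : ∀ i, (A i).coeff 0 = 0)
    (h_mul : ∀ i, zz * A i ∈ Submodule.span R (Set.range A)) (n : ℕ) (i : ι) :
    (A i).coeff n = 0 := by
  induction n generalizing i with
  | zero => exact h_zero i
  | succ n ih =>
    have h_span : Submodule.span R (Set.range A) ≤
        LinearMap.ker (HahnSeries.coeff.linearMap (R := R) (V := R) (n : ℤ)) :=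
      Submodule.span_le.mpr (Set.range_subset_iff.mpr ih)
    rw [Nat.cast_succ, ← coeff_zz_mul]
    exact h_span (h_mul i)

end Series

namespace HeavenlySetting

variable {R : Type*} [CommRing R] (H : HeavenlySetting R)

/-- The associated linear equations of the pair `P`, for the series
`s^2(z) = Σ_{n≥0} t^2_n z^n + Σ_{n≥1} s^2_n z^{-n}` encoded by `s n = s^2_{n+1}`:
`(z'-z) D^1(z') s^2(z) = -{S^2(z'), s^2(z)}` and `(z'-z) D^2(z') s^2(z) = {S^1(z'), s^2(z)}`,
coefficientwise in `z'`. -/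
def IsLinearSolution (P : LaxPair R) (s : ℕ → R) : Prop :=
  (∀ k : ℤ,
    H.Dcs s 0 (k - 1) - zz * H.Dcs s 0 k =
      -(CC (H.d 0 0 (H.coeffS P 1 k)) * H.ds2 s 1 0
        - CC (H.d 1 0 (H.coeffS P 1 k)) * H.ds2 s 0 0)) ∧
  (∀ k : ℤ,
    H.Dcs s 1 (k - 1) - zz * H.Dcs s 1 k =
      CC (H.d 0 0 (H.coeffS P 0 k)) * H.ds2 s 1 0
        - CC (H.d 1 0 (H.coeffS P 0 k)) * H.ds2 s 0 0)

theorem GenLaxSato.isLinearSolution {H : HeavenlySetting R} {P : LaxPair R}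
    (hgen : H.GenLaxSato P) : H.IsLinearSolution P (P.Sneg 1) :=
  ⟨hgen.1 1, hgen.2 1⟩

theorem d_sub (a : Fin 2) (m : ℕ) (u v : R) : H.d a m (u - v) = H.d a m u - H.d a m v :=
  map_sub (AddMonoidHom.mk' (H.d a m) (H.d_add a m)) u v

theorem ds2_sub_ds2 (s s' : ℕ → R) (a : Fin 2) (m : ℕ) :
    H.ds2 s a m - H.ds2 s' a m =
      tail (fun n => H.d a m (s n)) - tail (fun n => H.d a m (s' n)) :=
  add_sub_add_left_eq_sub _ _ _

theorem coeff_ds2_sub_ds2_zero (s s' : ℕ → R) (a : Fin 2) (m : ℕ) :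
    (H.ds2 s a m - H.ds2 s' a m).coeff 0 = 0 := by
  rw [ds2_sub_ds2, HahnSeries.coeff_sub, coeff_tail_zero, coeff_tail_zero, sub_zero]

theorem coeff_ds2_sub_ds2_add_one (s s' : ℕ → R) (a : Fin 2) (m n : ℕ) :
    (H.ds2 s a m - H.ds2 s' a m).coeff (n + 1 : ℕ) = H.d a m (s n - s' n) := by
  rw [ds2_sub_ds2, HahnSeries.coeff_sub, coeff_tail_add_one, coeff_tail_add_one, d_sub]

theorem Dcs_negSucc (s : ℕ → R) (a : Fin 2) (m : ℕ) :
    H.Dcs s a (Int.negSucc m) = H.ds2 s a m := by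
  have h_toNat : (-Int.negSucc m - 1).toNat = m := by omega
  rw [Dcs, if_pos (by omega), h_toNat]

theorem exists_zz_mul_ds2 (P : LaxPair R) (a : Fin 2) (m : ℕ) :
    ∃ α β : R, ∀ s : ℕ → R, H.IsLinearSolution P s →
      zz * H.ds2 s a m = H.ds2 s a (m + 1) + α • H.ds2 s 0 0 + β • H.ds2 s 1 0 := by
  match a with
  | 0 =>
    refine ⟨-H.d 1 0 (H.coeffS P 1 (Int.negSucc m)), H.d 0 0 (H.coeffS P 1 (Int.negSucc m)),
      fun s hs => ?_⟩
    have h := hs.1 (Int.negSucc m)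
    rw [Int.negSucc_sub_one, Dcs_negSucc, Dcs_negSucc, CC_mul_eq_smul, CC_mul_eq_smul] at h
    rw [neg_smul]
    linear_combination -h
  | 1 =>
    refine ⟨H.d 1 0 (H.coeffS P 0 (Int.negSucc m)), -H.d 0 0 (H.coeffS P 0 (Int.negSucc m)),
      fun s hs => ?_⟩
    have h := hs.2 (Int.negSucc m)
    rw [Int.negSucc_sub_one, Dcs_negSucc, Dcs_negSucc, CC_mul_eq_smul, CC_mul_eq_smul] at h
    rw [neg_smul]
    linear_combination -h

theorem zz_mul_ds2_sub_ds2_mem_span {P : LaxPair R} {s s' : ℕ → R}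
    (hs : H.IsLinearSolution P s) (hs' : H.IsLinearSolution P s') (i : Fin 2 × ℕ) :
    zz * (H.ds2 s i.1 i.2 - H.ds2 s' i.1 i.2) ∈
      Submodule.span R
        (Set.range fun j : Fin 2 × ℕ => H.ds2 s j.1 j.2 - H.ds2 s' j.1 j.2) := by
  set dφ : Fin 2 × ℕ → LS R := fun j => H.ds2 s j.1 j.2 - H.ds2 s' j.1 j.2
  obtain ⟨α, β, h⟩ := H.exists_zz_mul_ds2 P i.1 i.2
  have h_rec : zz * dφ i = dφ (i.1, i.2 + 1) + α • dφ (0, 0) + β • dφ (1, 0) := by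
    simp only [dφ, mul_sub, h s hs, h s' hs', smul_sub]
    abel
  have h_mem (j : Fin 2 × ℕ) : dφ j ∈ Submodule.span R (Set.range dφ) :=
    Submodule.subset_span (Set.mem_range_self j)
  rw [h_rec]
  exact add_mem (add_mem (h_mem _) (Submodule.smul_mem _ _ (h_mem _)))
    (Submodule.smul_mem _ _ (h_mem _))

end HeavenlySetting

theorem heavenly_uniqueness_lemma_general {R : Type*} [CommRing R] (H : HeavenlySetting R)
    {P : LaxPair R} {s s' : ℕ → R} (hs : H.IsLinearSolution P s)
    (hs' : H.IsLinearSolution P s') (a : Fin 2) (m n : ℕ) :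
    H.d a m (s n - s' n) = 0 := by
  rw [← H.coeff_ds2_sub_ds2_add_one s s' a m n]
  exact coeff_eq_zero_of_zz_mul_mem_span
    (A := fun j : Fin 2 × ℕ => H.ds2 s j.1 j.2 - H.ds2 s' j.1 j.2)
    (fun i => H.coeff_ds2_sub_ds2_zero s s' i.1 i.2)
    (H.zz_mul_ds2_sub_ds2_mem_span hs hs') (n + 1) (a, m)

/-- If the pair satisfies the generating Lax–Sato equations and
`s^2(z) = Σ_{n≥0} t^2_n z^n + Σ_{n≥1} s^2_n z^{-n}` (so `(s^2)_+ = (S^2)_+`) satisfies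
the associated linear equations `(z'-z) D^1(z') s^2(z) = -{S^2(z'), s^2(z)}` and
`(z'-z) D^2(z') s^2(z) = {S^1(z'), s^2(z)}` coefficientwise in `z'`, then
`φ := s^2 - S^2` is killed by all the derivations (coefficientwise). -/
theorem heavenly_uniqueness_lemma {R : Type*} [CommRing R]
    (H : HeavenlySetting R) (P : LaxPair R)
    (hgen : H.GenLaxSato P) (s : ℕ → R)
    (h1 : ∀ k : ℤ,
      H.Dcs s 0 (k - 1) - zz * H.Dcs s 0 k =
        -(CC (H.d 0 0 (H.coeffS P 1 k)) * H.ds2 s 1 0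
          - CC (H.d 1 0 (H.coeffS P 1 k)) * H.ds2 s 0 0))
    (h2 : ∀ k : ℤ,
      H.Dcs s 1 (k - 1) - zz * H.Dcs s 1 k =
        CC (H.d 0 0 (H.coeffS P 0 k)) * H.ds2 s 1 0
          - CC (H.d 1 0 (H.coeffS P 0 k)) * H.ds2 s 0 0) :
    ∀ a : Fin 2, ∀ m n : ℕ, H.d a m (s n - P.Sneg 1 n) = 0 :=
  heavenly_uniqueness_lemma_general H ⟨h1, h2⟩ hgen.isLinearSolution
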